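/- Let k be an algebraically closed field of characteristic 0 and let A be a finitely generated commutative k-algebra which is an integral domain. Let J be a non-zero Lie ideal of Der_k(A) and let P be a maximal ideal of A which is a nonsingular point, i.e., the localization A_P is formally smooth over k. Then there exist μ ∈ J and g ∈ A such that μ(μ(g)) ∉ P. -/

import Mathlib

set_option synthInstance.maxHeartbeats 400000

/-!
Let `N` be the ideal of `A` generated by all values `μ f` with `μ ∈ J`. Since
`τ (μ f) = ⁅τ, μ⁆ f + μ (τ f)`, it is stable under every derivation of `A`, and so is its extension
to `A_P` under every derivation of `A_P`.

A Noetherian local ring `B` with maximal ideal `m`, essentially of finite type over a field `k` of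
characteristic `0` and with `Ω[B⁄k]` projective, has no stable ideals other than `⊥` and `⊤`.
Indeed, as the residue field is formally smooth, there is a derivation `B → m / m ^ 2` extending
the projection of `m`; by projectivity it lifts to some `E ∈ m • Der(B)`, which induces the identity
on `m / m ^ 2` and hence multiplication by `n` on `m ^ n / m ^ (n + 1)`. A stable ideal contained in
`m ^ n`, `n ≥ 1`, is mapped by `E` into `m ^ (n + 1)`, so dividing by `n` it is itself contained in
`m ^ (n + 1)`; Krull's intersection theorem concludes.

Thus some `μ f` with `μ ∈ J` is not in `P`, and then `μ (μ f)` and `μ (μ (f * f))` are not both in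
`P`, because `2 * (μ f) ^ 2 = μ (μ (f * f)) - 2 * f * μ (μ f)`.
-/

open KaehlerDifferential IsLocalRing

section Derivation

variable {R A : Type*} [CommRing R] [CommRing A] [Algebra R A]

section Lift

variable {M N : Type*} [AddCommGroup M] [Module R M] [Module A M] [IsScalarTower R A M]
  [AddCommGroup N] [Module R N] [Module A N] [IsScalarTower R A N]

theorem exists_compDer_eq_of_surjective [Module.Projective A Ω[A⁄R]]
    {f : M →ₗ[A] N} (hf : Function.Surjective f) (d : Derivation R A N) :
    ∃ d' : Derivation R A M, f.compDer d' = d := by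
  obtain ⟨h, hh⟩ := Module.projective_lifting_property f d.liftKaehlerDifferential hf
  refine ⟨h.compDer (D R A), ?_⟩
  ext a
  simpa using LinearMap.congr_fun hh (D R A a)

theorem exists_compDer_eq_smul_of_isLocalizedModule [Module.FinitePresentation A Ω[A⁄R]]
    (S : Submonoid A) (f : M →ₗ[A] N) [IsLocalizedModule S f] (d : Derivation R A N) :
    ∃ s : S, ∃ d' : Derivation R A M, f.compDer d' = (s : A) • d := by
  obtain ⟨h, s, hs⟩ :=
    Module.FinitePresentation.exists_lift_of_isLocalizedModule S f d.liftKaehlerDifferential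
  refine ⟨s, h.compDer (D R A), ?_⟩
  ext a
  simpa [Submonoid.smul_def] using LinearMap.congr_fun hs (D R A a)

end Lift

theorem exists_derivation_eq_toCotangent (I : Ideal A) [Algebra.FormallySmooth R (A ⧸ I)] :
    ∃ d : Derivation R A I.Cotangent, ∀ x : I, d x = I.toCotangent x := by
  let π := (IsScalarTower.toAlgHom R A (A ⧸ I)).kerSquareLift
  have hπ : Function.Surjective π :=
    .of_comp (g := Ideal.Quotient.mk _) Ideal.Quotient.mk_surjective
  have hker : RingHom.ker π.toRingHom ^ 2 = ⊥ := by
    rw [AlgHom.ker_kerSquareLift, Ideal.cotangentIdeal_square]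
  obtain ⟨l, hl⟩ := (retractionKerCotangentToTensorEquivSection (R := R) (P := A) (S := A ⧸ I)
    Ideal.Quotient.mk_surjective).symm
      ⟨_, Algebra.FormallySmooth.comp_liftOfSurjective (.id R (A ⧸ I)) π hπ ⟨2, hker⟩⟩
  suffices ∀ I' : Ideal A, RingHom.ker (algebraMap A (A ⧸ I)) = I' →
      ∃ d : Derivation R A I'.Cotangent, ∀ x : I', d x = I'.toCotangent x from this I Ideal.mk_ker
  rintro _ rfl
  exact ⟨(l ∘ₗ TensorProduct.mk A (A ⧸ I) Ω[A⁄R] 1).compDer (D R A),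
    fun x ↦ LinearMap.congr_fun hl (Ideal.toCotangent _ x)⟩

theorem compDer_mem_smul_top {I : Ideal A} {ι : Type*} [Finite ι] {q : (ι → A) →ₗ[A] A}
    (hq : ∀ v, q v ∈ I) (c : Derivation R A (ι → A)) :
    q.compDer c ∈ I • (⊤ : Submodule A (Derivation R A A)) := by
  classical
  have := Fintype.ofFinite ι
  have hsum : q = ∑ i, q (Pi.single i 1) • LinearMap.proj i := by
    ext i
    simp [Pi.single_apply]
  rw [hsum, ← Derivation.llcomp_apply, map_sum, LinearMap.sum_apply]
  refine Submodule.sum_mem _ fun i _ ↦ ?_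
  rw [map_smul, LinearMap.smul_apply]
  exact Submodule.smul_mem_smul (hq _) Submodule.mem_top

/-- A derivation is an Euler derivation along `I` if it induces the identity on `I / I ^ 2`, like
the Euler field `∑ xᵢ ∂/∂xᵢ` at the origin of affine space. -/
def IsEulerDerivation (I : Ideal A) (E : Derivation R A A) : Prop :=
  ∀ x ∈ I, E x - x ∈ I ^ 2

theorem exists_isEulerDerivation_mem_smul_top [Module.Projective A Ω[A⁄R]] {I : Ideal A}
    [Algebra.FormallySmooth R (A ⧸ I)] (hI : I.FG) :
    ∃ E ∈ I • (⊤ : Submodule A (Derivation R A A)), IsEulerDerivation I E := by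
  have : Module.Finite A I := .of_fg hI
  obtain ⟨n, p, hp⟩ := Module.Finite.exists_fin' A I
  obtain ⟨d, hd⟩ := exists_derivation_eq_toCotangent (R := R) I
  obtain ⟨c, rfl⟩ := exists_compDer_eq_of_surjective
    (f := I.toCotangent ∘ₗ p) (I.toCotangent_surjective.comp hp) d
  exact ⟨(I.subtype ∘ₗ p).compDer c, compDer_mem_smul_top (fun v ↦ (p v).2) c,
    fun x hx ↦ I.toCotangent_eq.1 (hd ⟨x, hx⟩)⟩

theorem IsEulerDerivation.sub_natCast_mul_mem_pow_succ {I : Ideal A} {E : Derivation R A A}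
    (hE : IsEulerDerivation I E) {n : ℕ} (hn : 1 ≤ n) {u : A} (hu : u ∈ I ^ n) :
    E u - n * u ∈ I ^ (n + 1) := by
  induction n, hn using Nat.le_induction generalizing u with
  | base => simpa using hE u (by simpa using hu)
  | succ n _ ih =>
    rw [pow_succ] at hu
    induction hu using Submodule.mul_induction_on' with
    | mem_mul_mem a ha b hb =>
      have hEb : a * (E b - b) ∈ I ^ (n + 2) := by
        rw [pow_add]
        exact Ideal.mul_mem_mul ha (hE b hb)
      have hEa : (E a - n * a) * b ∈ I ^ (n + 2) := Ideal.mul_mem_mul (ih ha) hb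
      convert add_mem hEb hEa using 1
      simp only [Derivation.leibniz, smul_eq_mul]
      push_cast
      ring
    | add x _ y _ hx hy =>
      convert add_mem hx hy using 1
      rw [map_add]
      ring

theorem exists_apply_apply_notMem {P : Ideal A} [P.IsPrime] (h2 : (2 : A) ∉ P)
    {μ : Derivation R A A} {f : A} (hf : μ f ∉ P) : ∃ g, μ (μ g) ∉ P := by
  by_contra! hμ
  have hsq : 2 * (μ f * μ f) = μ (μ (f * f)) - 2 * f * μ (μ f) := by
    simp only [Derivation.leibniz, smul_eq_mul, map_add]
    ring
  have hmem : 2 * (μ f * μ f) ∈ P := hsq.symm ▸ sub_mem (hμ (f * f)) (P.mul_mem_left _ (hμ f))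
  simp only [Ideal.IsPrime.mul_mem_iff_mem_or_mem, h2, hf, or_self] at hmem

end Derivation

section DifferentialIdeal

variable {R A : Type*} [CommRing R] [CommRing A] [Algebra R A]

variable (R) in
/-- An ideal of an `R`-algebra is differential if every `R`-derivation of the algebra maps it into
itself. -/
def IsDifferentialIdeal (N : Ideal A) : Prop :=
  ∀ δ : Derivation R A A, ∀ a ∈ N, δ a ∈ N

theorem isDifferentialIdeal_span {s : Set A}
    (hs : ∀ δ : Derivation R A A, ∀ a ∈ s, δ a ∈ Ideal.span s) :
    IsDifferentialIdeal R (Ideal.span s) := by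
  intro δ a ha
  induction ha using Submodule.span_induction with
  | mem a ha => exact hs δ a ha
  | zero => simp
  | add a b _ _ ha hb => simpa using add_mem ha hb
  | smul r a ha hδ =>
    simpa using add_mem (Ideal.mul_mem_left _ r hδ) (Ideal.mul_mem_right (δ r) _ ha)

theorem IsDifferentialIdeal.map_isLocalization {N : Ideal A} (hN : IsDifferentialIdeal R N)
    {B : Type*} [CommRing B] [Algebra R B] [Algebra A B] [IsScalarTower R A B]
    (S : Submonoid A) [IsLocalization S B] [Module.FinitePresentation A Ω[A⁄R]] :
    IsDifferentialIdeal R (N.map (algebraMap A B)) := by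
  refine isDifferentialIdeal_span ?_
  rintro δ _ ⟨a, ha, rfl⟩
  obtain ⟨s, d, hd⟩ := exists_compDer_eq_smul_of_isLocalizedModule S (Algebra.linearMap A B)
    (δ.compAlgebraMap A)
  have hda : algebraMap A B (d a) = algebraMap A B s * δ (algebraMap A B a) := by
    simpa [Algebra.smul_def] using Derivation.congr_fun hd a
  rw [← Ideal.unit_mul_mem_iff_mem _ (IsLocalization.map_units B s), ← hda]
  exact Ideal.mem_map_of_mem _ (hN d a ha)

theorem IsDifferentialIdeal.apply_mem_mul {N I : Ideal A} (hN : IsDifferentialIdeal R N)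
    {E : Derivation R A A} (hE : E ∈ I • (⊤ : Submodule A (Derivation R A A)))
    {a : A} (ha : a ∈ N) : E a ∈ I * N := by
  refine Submodule.smul_induction_on hE (fun x hx δ _ ↦ ?_) fun δ ε hδ hε ↦ ?_
  · exact Ideal.mul_mem_mul hx (hN δ a ha)
  · exact add_mem hδ hε

end DifferentialIdeal

section CharZero

variable {k : Type*} [Field k] [CharZero k]

theorem IsDifferentialIdeal.le_pow {B : Type*} [CommRing B] [Algebra k B]
    [Module.Projective B Ω[B⁄k]] {I N : Ideal B} [Algebra.FormallySmooth k (B ⧸ I)] (hI : I.FG)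
    (hN : IsDifferentialIdeal k N) (hNI : N ≤ I) (n : ℕ) : N ≤ I ^ n := by
  obtain ⟨E, hE, hEuler⟩ := exists_isEulerDerivation_mem_smul_top (R := k) hI
  induction n with
  | zero => simp
  | succ n ih =>
    rcases eq_or_ne n 0 with rfl | hn
    · simpa using hNI
    intro u hu
    have hEu : E u ∈ I ^ (n + 1) := by
      rw [pow_succ']
      exact Ideal.mul_mono_right ih (hN.apply_mem_mul hE hu)
    have hnu : (n : B) * u ∈ I ^ (n + 1) := by
      simpa using sub_mem hEu
        (hEuler.sub_natCast_mul_mem_pow_succ (Nat.one_le_iff_ne_zero.2 hn) (ih hu))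
    have hunit : IsUnit (n : B) := by
      simpa using (Nat.cast_ne_zero.2 hn : (n : k) ≠ 0).isUnit.map (algebraMap k B)
    exact (Ideal.unit_mul_mem_iff_mem _ hunit).1 hnu

theorem IsDifferentialIdeal.eq_bot_or_eq_top {B : Type*} [CommRing B] [IsLocalRing B]
    [IsNoetherianRing B] [Algebra k B] [Module.Projective B Ω[B⁄k]]
    [Algebra.FormallySmooth k (ResidueField B)] {N : Ideal B} (hN : IsDifferentialIdeal k N) :
    N = ⊥ ∨ N = ⊤ := by
  refine or_iff_not_imp_right.2 fun hne ↦ le_bot_iff.1 ?_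
  have : Algebra.FormallySmooth k (B ⧸ maximalIdeal B) :=
    inferInstanceAs (Algebra.FormallySmooth k (ResidueField B))
  rw [← Ideal.iInf_pow_eq_bot_of_isLocalRing _ (maximalIdeal.isMaximal B).ne_top]
  exact le_iInf (hN.le_pow (IsNoetherian.noetherian _) (le_maximalIdeal hne))

end CharZero

section LieIdeal

variable {R A : Type*} [CommRing R] [CommRing A] [Algebra R A]

/-- The ideal of `A` generated by the values `μ f` of the derivations `μ` in a Lie ideal of
`Der_R(A)`. It cuts out the locus where the whole Lie ideal vanishes. -/
def derivationValueIdeal (J : LieIdeal R (Derivation R A A)) : Ideal A :=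
  Ideal.span {a | ∃ μ ∈ J, ∃ f, μ f = a}

variable {J : LieIdeal R (Derivation R A A)}

theorem derivationValueIdeal_le_iff {N : Ideal A} :
    derivationValueIdeal J ≤ N ↔ ∀ μ ∈ J, ∀ f, μ f ∈ N := by
  rw [derivationValueIdeal, Ideal.span_le]
  exact ⟨fun h μ hμ f ↦ h ⟨μ, hμ, f, rfl⟩, fun h _ ⟨μ, hμ, f, hf⟩ ↦ hf ▸ h μ hμ f⟩

theorem derivationValueIdeal_eq_bot_iff : derivationValueIdeal J = ⊥ ↔ J = ⊥ := by
  rw [← le_bot_iff, derivationValueIdeal_le_iff, LieSubmodule.eq_bot_iff]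
  simp only [Ideal.mem_bot, Derivation.ext_iff, Derivation.zero_apply]

theorem isDifferentialIdeal_derivationValueIdeal :
    IsDifferentialIdeal R (derivationValueIdeal J) := by
  refine isDifferentialIdeal_span ?_
  rintro τ _ ⟨μ, hμ, f, rfl⟩
  have hval := derivationValueIdeal_le_iff.1 (le_refl (derivationValueIdeal J))
  have hbracket : τ (μ f) = ⁅τ, μ⁆ f + μ (τ f) := by
    simp [Derivation.commutator_apply]
  exact hbracket ▸ add_mem (hval _ (lie_mem_right R _ J τ μ hμ) f) (hval μ hμ (τ f))

end LieIdeal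

theorem derivationValueIdeal_not_le {k A : Type*} [Field k] [CharZero k] [CommRing A] [IsDomain A]
    [Algebra k A] [Algebra.EssFiniteType k A] {J : LieIdeal k (Derivation k A A)} (hJ : J ≠ ⊥)
    (P : Ideal A) [P.IsPrime]
    [Module.Projective (Localization.AtPrime P) Ω[Localization.AtPrime P⁄k]] :
    ¬ derivationValueIdeal J ≤ P := by
  intro hJP
  let B := Localization.AtPrime P
  have : IsNoetherianRing A := Algebra.EssFiniteType.isNoetherianRing k A
  have : IsNoetherianRing B := IsLocalization.isNoetherianRing P.primeCompl B inferInstance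
  have : Module.FinitePresentation A Ω[A⁄k] := Module.finitePresentation_of_finite A _
  have : Algebra.EssFiniteType A B := .of_isLocalization B P.primeCompl
  have : Algebra.EssFiniteType k B := .comp k A B
  have : Algebra.EssFiniteType k (ResidueField B) := .comp k B _
  have hdiff : IsDifferentialIdeal k ((derivationValueIdeal J).map (algebraMap A B)) :=
    isDifferentialIdeal_derivationValueIdeal.map_isLocalization P.primeCompl
  rcases hdiff.eq_bot_or_eq_top with hbot | htop
  · have hinj : Function.Injective (algebraMap A B) :=
      IsLocalization.injective B P.primeCompl_le_nonZeroDivisors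
    exact hJ (derivationValueIdeal_eq_bot_iff.1 ((Ideal.map_eq_bot_iff_of_injective hinj).1 hbot))
  · have hle := Ideal.map_mono (f := algebraMap A B) hJP
    rw [htop, Localization.AtPrime.map_eq_maximalIdeal, top_le_iff] at hle
    exact (maximalIdeal.isMaximal B).ne_top hle

theorem exists_derivation_double_apply_nonvanishing_general {k A : Type*} [Field k] [CharZero k]
    [CommRing A] [IsDomain A] [Algebra k A] [Algebra.EssFiniteType k A]
    (J : LieIdeal k (Derivation k A A)) (hJ : J ≠ ⊥)
    (P : Ideal A) [P.IsPrime]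
    [Module.Projective (Localization.AtPrime P) Ω[Localization.AtPrime P⁄k]] :
    ∃ μ ∈ J, ∃ g : A, μ (μ g) ∉ P := by
  obtain ⟨μ, hμ, f, hf⟩ : ∃ μ ∈ J, ∃ f, μ f ∉ P := by
    simpa [derivationValueIdeal_le_iff] using derivationValueIdeal_not_le hJ P
  have h2 : (2 : A) ∉ P := fun h ↦ Ideal.IsPrime.ne_top ‹_› <|
    P.eq_top_of_isUnit_mem h (map_ofNat (algebraMap k A) 2 ▸ (two_ne_zero (α := k)).isUnit.map _)
  exact ⟨μ, hμ, exists_apply_apply_notMem h2 hf⟩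

/-- Every non-zero Lie ideal of `Der_k(A)` contains a derivation `μ` with `μ(μ(g))`
non-vanishing at a given nonsingular point `P`, for some function `g`. -/
theorem exists_derivation_double_apply_nonvanishing.{u}
    (k : Type u) [Field k] [IsAlgClosed k] [CharZero k]
    (A : Type u) [CommRing A] [IsDomain A] [Algebra k A] [Algebra.FiniteType k A]
    (J : LieIdeal k (Derivation k A A)) (hJ : J ≠ ⊥)
    (P : Ideal A) [P.IsMaximal]
    (hsmooth : Algebra.FormallySmooth k (Localization.AtPrime P)) :
    ∃ μ ∈ J, ∃ g : A, μ (μ g) ∉ P :=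
  exists_derivation_double_apply_nonvanishing_general J hJ P
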